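/- Let X be a Banach space. The map T : C₀₀(X) → H²_c(X), sending a convex body B with 0 ∈ int B to the function T(B) = (1/2)p_B² (where p_B is the Minkowski functional of B), is an order-reversing bijection, and both T and T⁻¹ are locally Lipschitz with respect to the Hausdorff metric on C₀₀(X) and the sup-metric d(f,g) = sup_{x∈B_X}|f(x)-g(x)| on H²_c(X). -/

import Mathlib

/-!
The inverse of `T` sends `f` to its sublevel set `{f ≤ 1/2}`: homogeneity turns this set into one
whose gauge is `√(2f)` (`surjOn_Tmap`), and a closed body is recovered from its gauge as
`{gauge ≤ 1}` (`gauge_le_one_iff_of_C00`).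

`T` is locally Lipschitz because bodies which are Hausdorff-close to `A` all contain one fixed
ball `rU`, where `U` is the unit ball. This is a cancellation law proved with Hahn-Banach
(`closedBall_subset_of_near`): if `2rU ⊆ A ⊆ B + rU` then `rU ⊆ B`. If moreover
`C ⊆ B + hU ⊆ (1 + h/r)B`, then `p_B ≤ (1 + h/r) p_C`, and since the gauges are at most `1/r` on
the unit ball, the squares differ by at most a multiple of `h`.

`T⁻¹` is locally Lipschitz because functions close to `T A` have a common quadratic lower bound,
so that their bodies lie in one fixed ball `RU` (`subset_closedBall_of_dsup_lt`). If
`d(T B, T C) = δ` and `x ∈ C`, then `p_B(x)² ≤ 1 + 2δR² ≤ (1 + δR²)²`, so `x / (1 + δR²)` is a point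
of `B` at distance at most `δR³` from `x`.
-/


open Set Filter Metric Topology

/-- Convex bodies with `0` in their interior. -/
def C00 (X : Type*) [NormedAddCommGroup X] [NormedSpace ℝ X] : Set (Set X) :=
  {B | Bornology.IsBounded B ∧ IsClosed B ∧ Convex ℝ B ∧ (0 : X) ∈ interior B}

/-- The cone `H²_c(X)` of continuous, coercive, positively quadratic homogeneous convex
functions on `X`. -/
def H2c (X : Type*) [NormedAddCommGroup X] [NormedSpace ℝ X] : Set (X → ℝ) :=
  {f | Continuous f ∧ Filter.Tendsto f (Bornology.cobounded X) Filter.atTop ∧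
    (∀ k : ℝ, 0 ≤ k → ∀ x, f (k • x) = k ^ 2 * f x) ∧ ConvexOn ℝ Set.univ f}

/-- `T(B) = (1/2)·(gauge B)²`. -/
noncomputable def Tmap {X : Type*} [NormedAddCommGroup X] [NormedSpace ℝ X]
    (B : Set X) : X → ℝ :=
  fun x => gauge B x ^ 2 / 2

/-- The sup-metric on functions: `d(f,g) = sup_{x ∈ B_X} |f x - g x|`. -/
noncomputable def dsup {X : Type*} [NormedAddCommGroup X] [NormedSpace ℝ X]
    (f g : X → ℝ) : ℝ :=
  ⨆ x : (Metric.closedBall (0 : X) 1), |f x - g x|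

section Helpers

variable {X : Type*} [NormedAddCommGroup X] [NormedSpace ℝ X]

/-! ### Convex bodies and their gauges -/

lemma mem_nhds_of_C00 {B : Set X} (hB : B ∈ C00 X) : B ∈ 𝓝 (0 : X) :=
  mem_interior_iff_mem_nhds.1 hB.2.2.2

lemma absorbent_of_C00 {B : Set X} (hB : B ∈ C00 X) : Absorbent ℝ B :=
  absorbent_nhds_zero (mem_nhds_of_C00 hB)

lemma zero_mem_of_C00 {B : Set X} (hB : B ∈ C00 X) : (0 : X) ∈ B :=
  mem_of_mem_nhds (mem_nhds_of_C00 hB)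

lemma gauge_le_one_iff_of_C00 {B : Set X} (hB : B ∈ C00 X) (x : X) : gauge B x ≤ 1 ↔ x ∈ B := by
  rw [gauge_le_one_iff_mem_closure hB.2.2.1 (mem_nhds_of_C00 hB), hB.2.1.closure_eq]

lemma hausdorffEDist_ne_top_of_C00 {B C : Set X} (hB : B ∈ C00 X) (hC : C ∈ C00 X) :
    hausdorffEDist B C ≠ ⊤ :=
  hausdorffEDist_ne_top_of_nonempty_of_bounded ⟨0, zero_mem_of_C00 hB⟩ ⟨0, zero_mem_of_C00 hC⟩
    hB.1 hC.1

lemma exists_closedBall_subset_of_C00 {B : Set X} (hB : B ∈ C00 X) :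
    ∃ r > 0, closedBall (0 : X) r ⊆ B :=
  Metric.nhds_basis_closedBall.mem_iff.1 (mem_nhds_of_C00 hB)

lemma exists_subset_closedBall_of_C00 {B : Set X} (hB : B ∈ C00 X) :
    ∃ R > 0, B ⊆ closedBall (0 : X) R :=
  hB.1.subset_closedBall_lt 0 0

lemma gauge_le_norm_div {B : Set X} {r : ℝ} (hr : 0 < r) (h : closedBall (0 : X) r ⊆ B) (x : X) :
    gauge B x ≤ ‖x‖ / r := by
  rw [le_div_iff₀ hr, mul_comm]
  exact mul_gauge_le_norm (ball_subset_closedBall.trans h)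

/-! ### Bijectivity -/

lemma Tmap_mem_H2c {B : Set X} (hB : B ∈ C00 X) : Tmap B ∈ H2c X := by
  refine ⟨?_, ?_, ?_, ?_⟩
  · exact ((continuous_gauge hB.2.2.1 (mem_nhds_of_C00 hB)).pow 2).div_const 2
  · obtain ⟨R, hR, hBR⟩ := exists_subset_closedBall_of_C00 hB
    have h : Tendsto (fun x : X => (‖x‖ / R) ^ 2 / 2) (Bornology.cobounded X) atTop :=
      ((tendsto_pow_atTop two_ne_zero).comp
        (tendsto_norm_cobounded_atTop.atTop_div_const hR)).atTop_div_const two_pos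
    refine tendsto_atTop_mono (fun x => ?_) h
    have := le_gauge_of_subset_closedBall (x := x) (absorbent_of_C00 hB) hR.le hBR
    have h0 : 0 ≤ ‖x‖ / R := by positivity
    unfold Tmap
    gcongr
  · intro k hk x
    simp only [Tmap, gauge_smul_of_nonneg hk, smul_eq_mul]
    ring
  · have hg : ConvexOn ℝ Set.univ (gauge B) := by
      refine ⟨convex_univ, fun x _ y _ a b ha hb _ => ?_⟩
      have := gauge_add_le hB.2.2.1 (absorbent_of_C00 hB) (a • x) (b • y)
      rwa [gauge_smul_of_nonneg ha, gauge_smul_of_nonneg hb] at this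
    have h2 := (hg.pow (fun x _ => gauge_nonneg x) 2).smul (c := (1 / 2 : ℝ)) (by norm_num)
    refine h2.congr fun x _ => ?_
    simp only [Tmap, Pi.pow_apply, smul_eq_mul]
    ring

lemma injOn_Tmap : Set.InjOn (Tmap (X := X)) (C00 X) := by
  intro B hB C hC h
  ext x
  have h1 : gauge B x ^ 2 / 2 = gauge C x ^ 2 / 2 := congrFun h x
  have h2 : gauge B x = gauge C x :=
    (pow_left_inj₀ (gauge_nonneg x) (gauge_nonneg x) two_ne_zero).1 (by linarith)
  rw [← gauge_le_one_iff_of_C00 hB, ← gauge_le_one_iff_of_C00 hC, h2]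

/-- The preimage of `f` under `T` is the sublevel set `{f ≤ 1/2}`. -/
lemma surjOn_Tmap : Set.SurjOn (Tmap (X := X)) (C00 X) (H2c X) := by
  rintro f ⟨hcont, hcoer, hhom, hconv⟩
  have hf0 : f 0 = 0 := by simpa using hhom 0 le_rfl 0
  obtain ⟨R, hR, hfR⟩ : ∃ R > 0, ∀ x : X, R < ‖x‖ → 1 ≤ f x := by
    have hb : Bornology.IsBounded {x : X | 1 ≤ f x}ᶜ :=
      Bornology.isBounded_compl_iff.2 (hcoer.eventually_ge_atTop 1)
    obtain ⟨R, hR, h⟩ := hb.subset_closedBall_lt 0 0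
    refine ⟨R, hR, fun x hx => ?_⟩
    by_contra hc
    have := h (show x ∈ {x : X | 1 ≤ f x}ᶜ from hc)
    rw [mem_closedBall_zero_iff] at this
    linarith
  -- By homogeneity, coercivity forces `f` to be positive away from `0`.
  have hpos : ∀ x, x ≠ 0 → 0 < f x := by
    intro x hx
    have hn : 0 < ‖x‖ := norm_pos_iff.2 hx
    have hk : 0 ≤ 2 * R / ‖x‖ := by positivity
    have h1 := hfR ((2 * R / ‖x‖) • x) (by
      rw [norm_smul, Real.norm_of_nonneg hk, div_mul_cancel₀ _ hn.ne']
      linarith)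
    rw [hhom _ hk] at h1
    by_contra hc
    nlinarith [sq_nonneg (2 * R / ‖x‖)]
  have hB : {x : X | f x ≤ 1 / 2} ∈ C00 X := by
    refine ⟨?_, isClosed_le hcont continuous_const, ?_, ?_⟩
    · refine (isBounded_closedBall (x := (0 : X)) (r := R)).subset fun x hx => ?_
      rw [mem_closedBall_zero_iff]
      by_contra hc
      have h1 := hfR x (not_le.1 hc)
      have h2 : f x ≤ 1 / 2 := hx
      linarith
    · simpa using hconv.convex_le (1 / 2)
    · rw [mem_interior_iff_mem_nhds]
      filter_upwards [hcont.continuousAt.eventually_lt_const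
        (show f 0 < 1 / 2 by rw [hf0]; norm_num)] with x hx using hx.le
  refine ⟨_, hB, funext fun x => ?_⟩
  rcases eq_or_ne x 0 with rfl | hx
  · simp [Tmap, hf0]
  have hfx := hpos x hx
  set c := √(2 * f x) with hc
  have hcpos : 0 < c := Real.sqrt_pos.2 (by linarith)
  have hc2 : c ^ 2 = 2 * f x := Real.sq_sqrt (by linarith)
  suffices h : gauge {x : X | f x ≤ 1 / 2} x = c by
    simp only [Tmap, h, hc2]
    ring
  apply le_antisymm
  · refine gauge_le_of_mem hcpos.le ?_
    rw [Set.mem_smul_set_iff_inv_smul_mem₀ hcpos.ne']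
    change f (c⁻¹ • x) ≤ 1 / 2
    rw [hhom _ (inv_nonneg.2 hcpos.le), inv_pow, hc2]
    apply le_of_eq
    field_simp
  · by_contra hlt
    -- If `x = b • y` with `b < c` and `f y ≤ 1/2`, then `f x ≤ b² / 2 < c² / 2 = f x`.
    obtain ⟨b, hb, hbc, y, hy, rfl⟩ :=
      exists_lt_of_gauge_lt (absorbent_of_C00 hB) (not_le.1 hlt)
    have hy' : f y ≤ 1 / 2 := hy
    have h1 : f (b • y) = b ^ 2 * f y := hhom b hb.le y
    simp only at h1 hc2
    have h2 : b ^ 2 < c ^ 2 := by gcongr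
    nlinarith [sq_nonneg b]

/-! ### The sup-metric -/

/-- The supremum in `dsup` is finite on the image of `T`, hence an upper bound. -/
lemma abs_sub_le_dsup {B C : Set X} (hB : B ∈ C00 X) (hC : C ∈ C00 X) {x : X} (hx : ‖x‖ ≤ 1) :
    |Tmap B x - Tmap C x| ≤ dsup (Tmap B) (Tmap C) := by
  obtain ⟨r, hr, hBr⟩ := exists_closedBall_subset_of_C00 hB
  obtain ⟨s, hs, hCs⟩ := exists_closedBall_subset_of_C00 hC
  have key : ∀ (D : Set X) (t : ℝ), 0 < t → closedBall (0 : X) t ⊆ D → ∀ y : X, ‖y‖ ≤ 1 →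
      0 ≤ Tmap D y ∧ Tmap D y ≤ (1 / t) ^ 2 / 2 := by
    intro D t ht hD y hy
    have h1 : gauge D y ≤ 1 / t := (gauge_le_norm_div ht hD y).trans (by gcongr)
    have h0 : 0 ≤ gauge D y := gauge_nonneg y
    unfold Tmap
    exact ⟨by positivity, by gcongr⟩
  refine le_ciSup (f := fun x : closedBall (0 : X) 1 => |Tmap B x - Tmap C x|)
    ⟨(1 / r) ^ 2 / 2 + (1 / s) ^ 2 / 2, ?_⟩ ⟨x, mem_closedBall_zero_iff.2 hx⟩
  rintro _ ⟨⟨y, hy⟩, rfl⟩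
  rw [mem_closedBall_zero_iff] at hy
  have h1 := key B r hr hBr y hy
  have h2 := key C s hs hCs y hy
  exact abs_le.2 ⟨by simp only; linarith [h1.1, h2.2], by simp only; linarith [h1.2, h2.1]⟩

/-- The quadratic homogeneity extends the bound on the unit ball to the whole space. -/
lemma abs_sub_le_dsup_mul {B C : Set X} (hB : B ∈ C00 X) (hC : C ∈ C00 X) (x : X) :
    |Tmap B x - Tmap C x| ≤ dsup (Tmap B) (Tmap C) * ‖x‖ ^ 2 := by
  rcases eq_or_ne x 0 with rfl | hx
  · simp [Tmap]
  have hn : 0 < ‖x‖ := norm_pos_iff.2 hx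
  have hy : ‖‖x‖⁻¹ • x‖ ≤ 1 := by
    rw [norm_smul, norm_inv, norm_norm, inv_mul_cancel₀ hn.ne']
  have h := abs_sub_le_dsup hB hC hy
  rw [(Tmap_mem_H2c hB).2.2.1 _ (inv_nonneg.2 hn.le), (Tmap_mem_H2c hC).2.2.1 _
    (inv_nonneg.2 hn.le), ← mul_sub, abs_mul, abs_of_nonneg (sq_nonneg _), inv_pow,
    inv_mul_le_iff₀ (by positivity)] at h
  linarith

lemma dsup_nonneg (f g : X → ℝ) : 0 ≤ dsup f g := Real.iSup_nonneg fun _ => abs_nonneg _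

lemma dsup_comm (f g : X → ℝ) : dsup f g = dsup g f := by
  simp only [dsup, abs_sub_comm]

/-! ### Local Lipschitz continuity of `T` -/

/-- Cancellation: if `2rU ⊆ A ⊆ B + rU` with `U` the unit ball, then `rU ⊆ B`. A point of
`rU` outside `B` would be separated from `B` by a functional `φ`, and evaluating `φ` on `2rU`
gives `2r‖φ‖ ≤ sup φ(B) + r‖φ‖`. -/
lemma closedBall_subset_of_near {A B : Set X} (hB : B ∈ C00 X) {r : ℝ} (hr : 0 < r)
    (hA : closedBall (0 : X) (2 * r) ⊆ A) (hAB : ∀ a ∈ A, ∃ b ∈ B, dist a b < r) :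
    closedBall (0 : X) r ⊆ B := by
  intro x hx
  rw [mem_closedBall_zero_iff] at hx
  by_contra hxB
  obtain ⟨φ, s, hs, hsx⟩ := geometric_hahn_banach_closed_point hB.2.2.1 hB.2.1 hxB
  have hs0 : 0 < s := by simpa using hs 0 (zero_mem_of_C00 hB)
  have key : ∀ z : X, ‖z‖ = 1 → φ z ≤ (s + r * ‖φ‖) / (2 * r) := by
    intro z hz
    have hzA : (2 * r) • z ∈ A := hA (by
      rw [mem_closedBall_zero_iff, norm_smul, hz, Real.norm_of_nonneg (by positivity), mul_one])
    obtain ⟨b, hb, hd⟩ := hAB _ hzA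
    rw [dist_eq_norm] at hd
    have h1 : φ ((2 * r) • z - b) ≤ r * ‖φ‖ :=
      (le_abs_self _).trans ((φ.le_opNorm _).trans (by
        rw [mul_comm]; gcongr))
    have h2 := hs b hb
    rw [map_sub, map_smul, smul_eq_mul] at h1
    rw [le_div_iff₀ (by positivity)]
    linarith
  have hφ : ‖φ‖ ≤ (s + r * ‖φ‖) / (2 * r) := by
    refine ContinuousLinearMap.opNorm_le_of_unit_norm (by positivity) fun z hz => ?_
    refine abs_le.2 ⟨?_, key z hz⟩
    have := key (-z) (by rwa [norm_neg])
    rw [map_neg] at this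
    linarith
  rw [le_div_iff₀ (by positivity)] at hφ
  have h3 : φ x ≤ ‖φ‖ * r := (le_abs_self _).trans ((φ.le_opNorm x).trans (by gcongr))
  linarith

/-- If both bodies contain `rU` and `C ⊆ B + hU`, then `C ⊆ (1 + h/r)B`, which bounds `p_B` by
`(1 + h/r) p_C`. -/
lemma gauge_le_of_near {B C : Set X} (hB : B ∈ C00 X) (hC : C ∈ C00 X) {r h : ℝ} (hr : 0 < r)
    (hBr : closedBall (0 : X) r ⊆ B) (hCB : ∀ c ∈ C, ∃ b ∈ B, dist c b < h) (x : X) :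
    gauge B x ≤ (1 + h / r) * gauge C x := by
  have hC1 : ∀ c ∈ C, gauge B c ≤ 1 + h / r := by
    intro c hc
    obtain ⟨b, hb, hd⟩ := hCB c hc
    rw [dist_eq_norm] at hd
    calc gauge B c = gauge B (b + (c - b)) := by rw [add_sub_cancel]
      _ ≤ gauge B b + gauge B (c - b) := gauge_add_le hB.2.2.1 (absorbent_of_C00 hB) _ _
      _ ≤ 1 + ‖c - b‖ / r := add_le_add (gauge_le_one_of_mem hb) (gauge_le_norm_div hr hBr _)
      _ ≤ 1 + h / r := by gcongr
  have hk : 0 < 1 + h / r := by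
    obtain ⟨b, hb, hd⟩ := hCB 0 (zero_mem_of_C00 hC)
    have : 0 < h := dist_nonneg.trans_lt hd
    positivity
  rw [← div_le_iff₀' hk]
  refine le_of_forall_gt fun a ha => ?_
  obtain ⟨b, hb, hba, y, hy, rfl⟩ := exists_lt_of_gauge_lt (absorbent_of_C00 hC) ha
  refine lt_of_le_of_lt ?_ hba
  simp only [gauge_smul_of_nonneg hb.le, smul_eq_mul]
  rw [div_le_iff₀ hk]
  exact mul_le_mul_of_nonneg_left (hC1 y hy) hb.le

/-- One-sided form of the Lipschitz bound: `p_B² - p_C² = (p_B - p_C)(p_B + p_C)`, where the first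
factor is at most `h/r²` and the second at most `2/r` on the unit ball. -/
lemma Tmap_sub_le_of_near {B C : Set X} (hB : B ∈ C00 X) (hC : C ∈ C00 X) {r h : ℝ} (hr : 0 < r)
    (hh : 0 ≤ h) (hBr : closedBall (0 : X) r ⊆ B) (hCr : closedBall (0 : X) r ⊆ C)
    (hCB : ∀ c ∈ C, ∃ b ∈ B, dist c b < h) {x : X} (hx : ‖x‖ ≤ 1) :
    Tmap B x - Tmap C x ≤ 1 / r ^ 3 * h := by
  have h1 := gauge_le_of_near hB hC hr hBr hCB x
  have hb : gauge B x ≤ 1 / r := (gauge_le_norm_div hr hBr x).trans (by gcongr)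
  have hc : gauge C x ≤ 1 / r := (gauge_le_norm_div hr hCr x).trans (by gcongr)
  have hb0 : 0 ≤ gauge B x := gauge_nonneg x
  have hc0 : 0 ≤ gauge C x := gauge_nonneg x
  have h2 : gauge B x - gauge C x ≤ h / r * (1 / r) := by
    have : h / r * gauge C x ≤ h / r * (1 / r) := by gcongr
    linarith
  have h3 : (gauge B x - gauge C x) * (gauge B x + gauge C x) ≤ h / r * (1 / r) * (2 * (1 / r)) :=
    mul_le_mul h2 (by linarith) (by positivity) (by positivity)
  have h4 : h / r * (1 / r) * (2 * (1 / r)) = 2 * (1 / r ^ 3 * h) := by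
    field_simp
  unfold Tmap
  linarith

/-- Two bodies containing a common ball `rU` satisfy the Lipschitz bound with constant `r⁻³`. -/
lemma dsup_le_of_closedBall_subset {B C : Set X} (hB : B ∈ C00 X) (hC : C ∈ C00 X) {r : ℝ}
    (hr : 0 < r) (hBr : closedBall (0 : X) r ⊆ B) (hCr : closedBall (0 : X) r ⊆ C) :
    dsup (Tmap B) (Tmap C) ≤ 1 / r ^ 3 * hausdorffDist B C := by
  have : Nonempty (closedBall (0 : X) 1) := ⟨⟨0, by simp⟩⟩
  refine ciSup_le ?_
  rintro ⟨x, hx⟩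
  rw [mem_closedBall_zero_iff] at hx
  rw [← div_le_iff₀' (by positivity)]
  -- The Hausdorff distance need not be attained, so the estimate is made for every larger `h`.
  refine le_of_forall_gt_imp_ge_of_dense fun h hh => ?_
  have hh0 : 0 ≤ h := hausdorffDist_nonneg.trans hh.le
  have hfin := hausdorffEDist_ne_top_of_C00 hB hC
  rw [div_le_iff₀' (by positivity)]
  have h1 := Tmap_sub_le_of_near hB hC hr hh0 hBr hCr (fun c hc => by
    obtain ⟨b, hb, hd⟩ := exists_dist_lt_of_hausdorffDist_lt' hc hh hfin
    exact ⟨b, hb, by rwa [dist_comm]⟩) hx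
  have h2 := Tmap_sub_le_of_near hC hB hr hh0 hCr hBr
    (fun b hb => exists_dist_lt_of_hausdorffDist_lt hb hh hfin) hx
  exact abs_le.2 ⟨by simp only; linarith, h1⟩

/-! ### Local Lipschitz continuity of the inverse -/

/-- If `A ⊆ RU`, then `T A ≥ ‖·‖² / (2R²)`, and a perturbation of `T A` by at most `1/(4R²)` on
the unit ball keeps half of this bound; the constant `2R` leaves some room. -/
lemma subset_closedBall_of_dsup_lt {A B : Set X} (hA : A ∈ C00 X) (hB : B ∈ C00 X) {R : ℝ}
    (hR : 0 < R) (hAR : A ⊆ closedBall (0 : X) R) (h : dsup (Tmap A) (Tmap B) < 1 / (4 * R ^ 2)) :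
    B ⊆ closedBall (0 : X) (2 * R) := by
  intro x hx
  rw [mem_closedBall_zero_iff]
  have h1 : ‖x‖ / R ≤ gauge A x := le_gauge_of_subset_closedBall (absorbent_of_C00 hA) hR.le hAR
  have h2 : gauge B x ≤ 1 := gauge_le_one_of_mem hx
  have h3 := (le_abs_self _).trans (abs_sub_le_dsup_mul hA hB x)
  have h4 : dsup (Tmap A) (Tmap B) * ‖x‖ ^ 2 ≤ 1 / (4 * R ^ 2) * ‖x‖ ^ 2 := by gcongr
  have h5 : (‖x‖ / R) ^ 2 ≤ gauge A x ^ 2 := by gcongr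
  have h6 : gauge B x ^ 2 ≤ 1 := pow_le_one₀ (gauge_nonneg x) h2
  have h7 : 1 / (4 * R ^ 2) * ‖x‖ ^ 2 = (‖x‖ / R) ^ 2 / 4 := by
    field_simp
  unfold Tmap at h3 h4
  have h8 : (‖x‖ / R) ^ 2 ≤ 2 ^ 2 := by linarith
  have h9 := (pow_le_pow_iff_left₀ (by positivity) (by norm_num) two_ne_zero).1 h8
  rwa [div_le_iff₀ hR] at h9

/-- Shrinking a point of `C` by the factor `1 + δR²`, `δ = d(T B, T C)`, moves it into `B`. -/
lemma exists_mem_dist_le {B C : Set X} (hB : B ∈ C00 X) (hC : C ∈ C00 X) {R : ℝ}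
    (hR : 0 < R) (hCR : C ⊆ closedBall (0 : X) R) {x : X} (hx : x ∈ C) :
    ∃ y ∈ B, dist x y ≤ R ^ 3 * dsup (Tmap B) (Tmap C) := by
  have hδ := dsup_nonneg (Tmap B) (Tmap C)
  set δ := dsup (Tmap B) (Tmap C) with hδ_def
  have hxR : ‖x‖ ≤ R := mem_closedBall_zero_iff.1 (hCR hx)
  set t := δ * R ^ 2 with ht
  have ht0 : 0 ≤ t := by positivity
  have h1t : 0 < 1 + t := by linarith
  have h1 := (le_abs_self _).trans (abs_sub_le_dsup_mul hB hC x)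
  have h2 : δ * ‖x‖ ^ 2 ≤ t := by rw [ht]; gcongr
  have h3 : gauge C x ^ 2 ≤ 1 := pow_le_one₀ (gauge_nonneg x) (gauge_le_one_of_mem hx)
  rw [← hδ_def] at h1
  unfold Tmap at h1
  have h4 : gauge B x ≤ 1 + t :=
    (pow_le_pow_iff_left₀ (gauge_nonneg x) h1t.le two_ne_zero).1 (by nlinarith [sq_nonneg t])
  refine ⟨(1 + t)⁻¹ • x, ?_, ?_⟩
  · rw [← gauge_le_one_iff_of_C00 hB, gauge_smul_of_nonneg (inv_nonneg.2 h1t.le), smul_eq_mul,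
      inv_mul_le_iff₀ h1t, mul_one]
    exact h4
  · have h5 : x - (1 + t)⁻¹ • x = (t * (1 + t)⁻¹) • x := by
      rw [show t * (1 + t)⁻¹ = 1 - (1 + t)⁻¹ by field_simp; ring, sub_smul, one_smul]
    have h6 : (1 + t)⁻¹ ≤ 1 := inv_le_one_of_one_le₀ (by linarith)
    have h7 : 0 ≤ (1 + t)⁻¹ := inv_nonneg.2 h1t.le
    rw [dist_eq_norm, h5, norm_smul, Real.norm_of_nonneg (by positivity)]
    calc t * (1 + t)⁻¹ * ‖x‖ ≤ t * 1 * R := by gcongr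
      _ = R ^ 3 * δ := by rw [ht]; ring

end Helpers

/-- The map `T : C₀₀(X) → H²_c(X)`, `T(B) = (1/2)p_B²`, is an
order-reversing bijection, and both `T` and `T⁻¹` are locally Lipschitz with respect to
the Hausdorff metric on `C₀₀(X)` and the sup-metric on `H²_c(X)`. -/
theorem Tmap_fully_order_reversing_locally_Lipschitz
    {X : Type*} [NormedAddCommGroup X] [NormedSpace ℝ X] [CompleteSpace X] :
    Set.BijOn Tmap (C00 X) (H2c X) ∧
    (∀ A ∈ C00 X, ∀ B ∈ C00 X, A ⊆ B → ∀ x, Tmap B x ≤ Tmap A x) ∧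
    (∀ A ∈ C00 X, ∃ ε > (0 : ℝ), ∃ L : ℝ, 0 ≤ L ∧
      ∀ B ∈ C00 X, ∀ C ∈ C00 X,
        Metric.hausdorffDist A B < ε → Metric.hausdorffDist A C < ε →
          dsup (Tmap B) (Tmap C) ≤ L * Metric.hausdorffDist B C) ∧
    (∀ A ∈ C00 X, ∃ ε > (0 : ℝ), ∃ L : ℝ, 0 ≤ L ∧
      ∀ B ∈ C00 X, ∀ C ∈ C00 X,
        dsup (Tmap A) (Tmap B) < ε → dsup (Tmap A) (Tmap C) < ε →
          Metric.hausdorffDist B C ≤ L * dsup (Tmap B) (Tmap C)) := by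
  refine ⟨⟨fun B hB => Tmap_mem_H2c hB, injOn_Tmap, surjOn_Tmap⟩, ?_, ?_, ?_⟩
  · intro A hA B _ hAB x
    have h := gauge_mono (absorbent_of_C00 hA) hAB x
    have h0 : 0 ≤ gauge B x := gauge_nonneg x
    unfold Tmap
    gcongr
  · intro A hA
    obtain ⟨ρ, hρ, hAρ⟩ := exists_closedBall_subset_of_C00 hA
    have hr : 0 < ρ / 2 := by positivity
    have hball : ∀ B ∈ C00 X, hausdorffDist A B < ρ / 2 → closedBall (0 : X) (ρ / 2) ⊆ B := by
      intro B hB h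
      refine closedBall_subset_of_near (A := A) hB hr ?_ fun a ha => ?_
      · rwa [mul_div_cancel₀ ρ two_ne_zero]
      exact exists_dist_lt_of_hausdorffDist_lt ha h (hausdorffEDist_ne_top_of_C00 hA hB)
    refine ⟨ρ / 2, hr, 1 / (ρ / 2) ^ 3, by positivity, fun B hB C hC hAB hAC => ?_⟩
    exact dsup_le_of_closedBall_subset hB hC hr (hball B hB hAB) (hball C hC hAC)
  · intro A hA
    obtain ⟨R, hR, hAR⟩ := exists_subset_closedBall_of_C00 hA
    have hR2 : 0 < 2 * R := by positivity
    refine ⟨1 / (4 * R ^ 2), by positivity, (2 * R) ^ 3, by positivity,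
      fun B hB C hC hAB hAC => ?_⟩
    have hBR := subset_closedBall_of_dsup_lt hA hB hR hAR hAB
    have hCR := subset_closedBall_of_dsup_lt hA hC hR hAR hAC
    refine hausdorffDist_le_of_mem_dist
      (mul_nonneg (by positivity) (dsup_nonneg _ _)) (fun x hx => ?_) fun x hx => ?_
    · rw [dsup_comm]
      exact exists_mem_dist_le hC hB hR2 hBR hx
    · exact exists_mem_dist_le hB hC hR2 hCR hx
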